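/- Let d ≥ 1, let T_{n-1}^d be a d-hypertree on [n-1] and T_{n-1}^{d-1} a (d-1)-hypertree on [n-1] over F_2, and let T_n^d = T_{n-1}^d ⊕ Cone_n(T_{n-1}^{d-1}), which is a d-hypertree on [n]. Then for every (d-1)-cycle Z on [n]: setting F = Fill(Link_n(Z), T_{n-1}^{d-1}) and Z' = Z ⊕ Cone_n(Link_n(Z)) ⊕ F, the set Z' is a (d-1)-cycle on [n-1] and Fill(Z, T_n^d) = Cone_n(F) ⊕ Fill(Z', T_{n-1}^d). -/

import Mathlib

open Finset symmDiff

/-- The vertex set `[n] = {1, …, n}`. -/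
def rng (n : ℕ) : Finset ℕ := Finset.Icc 1 n

/-- The set of `d`-simplices (i.e. `(d+1)`-element subsets) on the vertex set `V`. -/
def simplices (V : Finset ℕ) (d : ℕ) : Finset (Finset ℕ) :=
  V.powerset.filter fun σ => σ.card = d + 1

/-- The mod-2 boundary of a set `X` of simplices: the set of faces `τ` of codimension one
(`|τ| + 1 = |σ|`) contained in an odd number of members of `X`. -/
def bd (X : Finset (Finset ℕ)) : Finset (Finset ℕ) :=
  (X.biUnion fun σ => σ.powerset).filter
    fun τ => Odd (X.filter fun σ => τ ⊆ σ ∧ τ.card + 1 = σ.card).card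

/-- A set of simplices is acyclic (a forest) over `F_2` if no nonempty subset has
empty boundary. -/
def IsAcyclic (F : Finset (Finset ℕ)) : Prop :=
  ∀ Y ⊆ F, Y ≠ ∅ → bd Y ≠ ∅

/-- A `d`-hypertree on `V`: a maximal acyclic set of `d`-simplices on `V`. -/
def IsHypertreeOn (V : Finset ℕ) (d : ℕ) (T : Finset (Finset ℕ)) : Prop :=
  T ⊆ simplices V d ∧ IsAcyclic T ∧
    ∀ G, T ⊆ G → G ⊆ simplices V d → IsAcyclic G → G = T

/-- A simple cycle over `F_2`: a nonempty set with empty boundary, no nonempty proper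
subset of which has empty boundary. -/
def IsSimpleCycle (Z : Finset (Finset ℕ)) : Prop :=
  Z ≠ ∅ ∧ bd Z = ∅ ∧ ∀ Y ⊂ Z, Y ≠ ∅ → bd Y ≠ ∅

/-- Collapsibility: `X` can be reduced to `∅` by repeatedly removing a simplex `σ ∈ X`
containing a codimension-one face contained in no other current member of `X`. -/
inductive Collapsible : Finset (Finset ℕ) → Prop
  | empty : Collapsible ∅
  | step (X : Finset (Finset ℕ)) (σ τ : Finset ℕ) (hσ : σ ∈ X) (hτ : τ ⊆ σ)
      (hcard : τ.card + 1 = σ.card) (huniq : ∀ σ' ∈ X, τ ⊆ σ' → σ' = σ)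
      (h : Collapsible (X.erase σ)) : Collapsible X

/-- The cone over `X` with apex `v`. -/
def cone (v : ℕ) (X : Finset (Finset ℕ)) : Finset (Finset ℕ) :=
  X.image (insert v)

/-- The link of the vertex `v` in `X`. -/
def link (v : ℕ) (X : Finset (Finset ℕ)) : Finset (Finset ℕ) :=
  (X.filter fun σ => v ∈ σ).image fun σ => σ.erase v

/-- `fill Z T`: the subset `F ⊆ T` with `∂F = Z` (when it exists; it is unique when `T`
is a hypertree and `Z` a cycle). -/
noncomputable def fill (Z T : Finset (Finset ℕ)) : Finset (Finset ℕ) :=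
  if h : ∃ F, F ⊆ T ∧ bd F = Z then h.choose else ∅

/-- The average filling-volume `μ(T)` of a `d`-hypertree `T` on `[n]`. -/
noncomputable def fillVolAvg (n d : ℕ) (T : Finset (Finset ℕ)) : ℝ :=
  (∑ σ ∈ simplices (rng n) d, ((fill (bd {σ}) T).card : ℝ)) / (n.choose (d + 1) : ℝ)

open Classical in
/-- The cut of `τ` in `T`: the set of `d`-simplices `σ` on `[n]` such that
`T ⊕ {τ} ⊕ {σ}` is a `d`-hypertree on `[n]`. -/
noncomputable def cut (n d : ℕ) (τ : Finset ℕ) (T : Finset (Finset ℕ)) : Finset (Finset ℕ) :=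
  (simplices (rng n) d).filter fun σ => IsHypertreeOn (rng n) d ((T ∆ {τ}) ∆ {σ})

/-! Split a chain as `X = deletion v X ∆ cone v (link v X)`. Since `∂(cone v B) = B ∆ cone v (∂B)`,
a cycle `Z` has `∂(deletion v Z) = link v Z` and `∂(link v Z) = ∅`. The first equation shows that
`link v Z` bounds, so that it has a filling `F` in the lower hypertree, and that
`Z' = deletion v Z ∆ F` is a cycle avoiding `v`; cycles on `V` bound, so `Z'` has a filling `P` in
the upper hypertree. The boundary of `cone v F ∆ P` is then `Z`. No other filling exists, as the
conical extension is acyclic: a cycle `Y` in it has a cycle of the lower hypertree as its link, so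
the link is empty, whence `Y = deletion v Y` is a cycle in the upper hypertree, also empty. -/

section SymmDiff

variable {α : Type*} [DecidableEq α]

lemma odd_card_symmDiff (A B : Finset α) : Odd #(A ∆ B) ↔ ¬(Odd #A ↔ Odd #B) := by
  have card_symmDiff : #(A ∆ B) = #(A \ B) + #(B \ A) := card_union_of_disjoint disjoint_sdiff_sdiff
  have card_left : #(A \ B) + #(A ∩ B) = #A := card_sdiff_add_card_inter A B
  have card_right : #(B \ A) + #(A ∩ B) = #B := inter_comm B A ▸ card_sdiff_add_card_inter B A
  grind

lemma filter_symmDiff_distrib (p : α → Prop) [DecidablePred p] (A B : Finset α) :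
    (A ∆ B).filter p = A.filter p ∆ B.filter p := by
  grind [mem_symmDiff]

lemma symmDiff_subset_of_subset {A B C : Finset α} (hA : A ⊆ C) (hB : B ⊆ C) : A ∆ B ⊆ C :=
  symmDiff_subset_union.trans (union_subset hA hB)

lemma singleton_symmDiff_of_notMem {a : α} {A : Finset α} (ha : a ∉ A) :
    {a} ∆ A = insert a A :=
  symmDiff_eq_union (disjoint_singleton_left.mpr ha)

end SymmDiff

section Chains

variable {v : ℕ} {V : Finset ℕ} {d : ℕ} {σ τ : Finset ℕ} {A B F G S T X Y Z : Finset (Finset ℕ)}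

lemma mem_simplices : σ ∈ simplices V d ↔ σ ⊆ V ∧ #σ = d + 1 := by
  simp only [simplices, mem_filter, mem_powerset]

lemma simplices_mono {W : Finset ℕ} (h : V ⊆ W) : simplices V d ⊆ simplices W d :=
  filter_subset_filter _ (powerset_mono.mpr h)

lemma mem_bd : τ ∈ bd X ↔ Odd #{σ ∈ X | τ ⊆ σ ∧ #τ + 1 = #σ} := by
  simp only [bd, mem_filter, mem_biUnion, mem_powerset, and_iff_right_iff_imp]
  intro h
  obtain ⟨σ, hσ⟩ := card_pos.mp h.pos
  obtain ⟨hσX, hτσ, -⟩ := mem_filter.mp hσ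
  exact ⟨σ, hσX, hτσ⟩

lemma bd_symmDiff (X Y : Finset (Finset ℕ)) : bd (X ∆ Y) = bd X ∆ bd Y := by
  ext τ
  rw [mem_symmDiff, mem_bd, mem_bd, mem_bd, filter_symmDiff_distrib, odd_card_symmDiff]
  tauto

lemma bd_empty : bd ∅ = ∅ := rfl

lemma bd_singleton (σ : Finset ℕ) : bd {σ} = σ.image σ.erase := by
  ext τ
  have mem_bd_iff : τ ∈ bd {σ} ↔ τ ⊆ σ ∧ #τ + 1 = #σ := by
    rw [mem_bd, filter_singleton]
    split_ifs with h <;> simp [h]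
  rw [mem_bd_iff, ← exists_eq_insert_iff]
  grind

/-- The chain `X` avoids the vertex `v`: none of its simplices contains `v`. This is what makes
`cone v` injective on `X`, since `cone` inserts `v` even into simplices already containing it. -/
def Avoids (v : ℕ) (X : Finset (Finset ℕ)) : Prop := ∀ σ ∈ X, v ∉ σ

/-- The deletion of the vertex `v` from `X`: the simplices of `X` not containing `v`, that is, `X`
without the open star of `v`. -/
def deletion (v : ℕ) (X : Finset (Finset ℕ)) : Finset (Finset ℕ) := {σ ∈ X | v ∉ σ}

lemma avoids_of_subset_simplices (hv : v ∉ V) (hX : X ⊆ simplices V d) : Avoids v X :=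
  fun _ hσ hvσ => hv ((mem_simplices.mp (hX hσ)).1 hvσ)

lemma Avoids.mono (hX : Avoids v X) (h : Y ⊆ X) : Avoids v Y :=
  fun σ hσ => hX σ (h hσ)

lemma Avoids.symmDiff (hX : Avoids v X) (hY : Avoids v Y) : Avoids v (X ∆ Y) := by
  grind [Avoids, mem_symmDiff]

lemma Avoids.bd (hX : Avoids v X) : Avoids v (bd X) := by
  intro τ hτ hvτ
  obtain ⟨σ, hσ⟩ := card_pos.mp (mem_bd.mp hτ).pos
  obtain ⟨hσX, hτσ, -⟩ := mem_filter.mp hσ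
  exact hX σ hσX (hτσ hvτ)

lemma avoids_deletion (v : ℕ) (X : Finset (Finset ℕ)) : Avoids v (deletion v X) :=
  fun _ hσ => (mem_filter.mp hσ).2

lemma mem_link : τ ∈ link v X ↔ v ∉ τ ∧ insert v τ ∈ X := by
  simp only [link, mem_image, mem_filter]
  constructor
  · rintro ⟨σ, ⟨hσX, hvσ⟩, rfl⟩
    exact ⟨notMem_erase v σ, by rwa [insert_erase hvσ]⟩
  · rintro ⟨hvτ, hτX⟩
    exact ⟨insert v τ, ⟨hτX, mem_insert_self v τ⟩, erase_insert hvτ⟩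

lemma avoids_link (v : ℕ) (X : Finset (Finset ℕ)) : Avoids v (link v X) :=
  fun _ hτ => (mem_link.mp hτ).1

lemma Avoids.mem_cone (hX : Avoids v X) : σ ∈ cone v X ↔ v ∈ σ ∧ σ.erase v ∈ X := by
  simp only [cone, mem_image]
  constructor
  · rintro ⟨τ, hτX, rfl⟩
    exact ⟨mem_insert_self v τ, by rwa [erase_insert (hX τ hτX)]⟩
  · rintro ⟨hvσ, hσX⟩
    exact ⟨σ.erase v, hσX, insert_erase hvσ⟩

lemma apex_mem_of_mem_cone (hσ : σ ∈ cone v X) : v ∈ σ := by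
  obtain ⟨τ, -, rfl⟩ := mem_image.mp hσ
  exact mem_insert_self v τ

lemma cone_symmDiff (hX : Avoids v X) (hY : Avoids v Y) :
    cone v (X ∆ Y) = cone v X ∆ cone v Y := by
  ext σ
  rw [(hX.symmDiff hY).mem_cone, mem_symmDiff, mem_symmDiff, hX.mem_cone, hY.mem_cone]
  tauto

lemma cone_subset_simplices (hv : v ∈ V) (hX : X ⊆ simplices V d) (hvX : Avoids v X) :
    cone v X ⊆ simplices V (d + 1) := by
  intro σ hσ
  obtain ⟨τ, hτX, rfl⟩ := mem_image.mp hσ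
  obtain ⟨hτV, hτ⟩ := mem_simplices.mp (hX hτX)
  exact mem_simplices.mpr
    ⟨insert_subset hv hτV, by rw [card_insert_of_notMem (hvX τ hτX), hτ]⟩

lemma deletion_subset_simplices (hX : X ⊆ simplices (insert v V) d) :
    deletion v X ⊆ simplices V d := by
  intro σ hσ
  obtain ⟨hσX, hvσ⟩ := mem_filter.mp hσ
  obtain ⟨hσV, hσd⟩ := mem_simplices.mp (hX hσX)
  exact mem_simplices.mpr ⟨(subset_insert_iff_of_notMem hvσ).mp hσV, hσd⟩

lemma bd_cone_singleton (hv : v ∉ σ) : bd (cone v {σ}) = {σ} ∆ cone v (bd {σ}) := by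
  have faces_through_v : σ.image (insert v σ).erase = cone v (bd {σ}) := by
    rw [bd_singleton, cone, image_image]
    exact image_congr fun a ha => erase_insert_of_ne fun h => hv (h ▸ ha)
  calc bd (cone v {σ})
      = (insert v σ).image (insert v σ).erase := by rw [cone, image_singleton, bd_singleton]
    _ = insert σ (cone v (bd {σ})) := by rw [image_insert, erase_insert hv, faces_through_v]
    _ = {σ} ∆ cone v (bd {σ}) := (singleton_symmDiff_of_notMem (hv ∘ apex_mem_of_mem_cone)).symm

lemma bd_cone (hX : Avoids v X) : bd (cone v X) = X ∆ cone v (bd X) := by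
  induction X using Finset.induction_on with
  | empty => rfl
  | insert σ X hσ ih =>
    have hvX : Avoids v X := hX.mono (subset_insert σ X)
    have hvσ : Avoids v {σ} := hX.mono (singleton_subset_iff.mpr (mem_insert_self σ X))
    rw [← singleton_symmDiff_of_notMem hσ, cone_symmDiff hvσ hvX, bd_symmDiff, bd_symmDiff,
      cone_symmDiff hvσ.bd hvX.bd, bd_cone_singleton (hX σ (mem_insert_self σ X)), ih hvX,
      symmDiff_symmDiff_symmDiff_comm]

lemma symmDiff_cone_link (v : ℕ) (X : Finset (Finset ℕ)) :
    X ∆ cone v (link v X) = deletion v X := by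
  ext σ
  rw [mem_symmDiff, (avoids_link v X).mem_cone, mem_link, deletion, mem_filter]
  grind [insert_erase]

lemma deletion_symmDiff_cone_link (v : ℕ) (X : Finset (Finset ℕ)) :
    deletion v X ∆ cone v (link v X) = X := by
  rw [← symmDiff_cone_link, symmDiff_symmDiff_cancel_right]

lemma Avoids.symmDiff_cone_eq_union (hA : Avoids v A) (B : Finset (Finset ℕ)) :
    A ∆ cone v B = A ∪ cone v B :=
  symmDiff_eq_union (disjoint_left.mpr fun σ hσA hσB => hA σ hσA (apex_mem_of_mem_cone hσB))

lemma Avoids.deletion_symmDiff_cone (hA : Avoids v A) (B : Finset (Finset ℕ)) :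
    deletion v (A ∆ cone v B) = A := by
  rw [hA.symmDiff_cone_eq_union]
  ext σ
  simp only [deletion, mem_filter, mem_union]
  exact ⟨fun ⟨h, hvσ⟩ => h.resolve_right (hvσ ∘ apex_mem_of_mem_cone), fun h => ⟨Or.inl h, hA σ h⟩⟩

lemma Avoids.link_symmDiff_cone (hA : Avoids v A) (hB : Avoids v B) :
    link v (A ∆ cone v B) = B := by
  ext τ
  have insert_notMem : insert v τ ∉ A := fun h => hA _ h (mem_insert_self v τ)
  rw [hA.symmDiff_cone_eq_union, mem_link, mem_union, hB.mem_cone]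
  grind [Avoids, erase_insert]

lemma bd_eq_symmDiff_cone (v : ℕ) (X : Finset (Finset ℕ)) :
    bd X = (bd (deletion v X) ∆ link v X) ∆ cone v (bd (link v X)) := by
  conv_lhs => rw [← deletion_symmDiff_cone_link v X]
  rw [bd_symmDiff, bd_cone (avoids_link v X), symmDiff_assoc]

lemma deletion_bd (v : ℕ) (X : Finset (Finset ℕ)) :
    deletion v (bd X) = bd (deletion v X) ∆ link v X := by
  rw [bd_eq_symmDiff_cone v X]
  exact ((avoids_deletion v X).bd.symmDiff (avoids_link v X)).deletion_symmDiff_cone _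

lemma link_bd (v : ℕ) (X : Finset (Finset ℕ)) : link v (bd X) = bd (link v X) := by
  rw [bd_eq_symmDiff_cone v X]
  exact ((avoids_deletion v X).bd.symmDiff (avoids_link v X)).link_symmDiff_cone
    (avoids_link v X).bd

lemma bd_deletion_of_bd_eq_empty (v : ℕ) (hX : bd X = ∅) : bd (deletion v X) = link v X :=
  symmDiff_eq_empty.mp ((deletion_bd v X).symm.trans (by rw [hX]; rfl))

lemma bd_link_of_bd_eq_empty (v : ℕ) (hX : bd X = ∅) : bd (link v X) = ∅ :=
  (link_bd v X).symm.trans (by rw [hX]; rfl)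

lemma bd_cone_deletion_of_bd_eq_empty (v : ℕ) (hX : bd X = ∅) :
    bd (cone v (deletion v X)) = X := by
  rw [bd_cone (avoids_deletion v X), bd_deletion_of_bd_eq_empty v hX, deletion_symmDiff_cone_link]

lemma exists_bd_eq_of_bd_eq_empty (hXV : X ⊆ simplices V d) (hX : bd X = ∅) :
    ∃ Y ⊆ simplices V (d + 1), bd Y = X := by
  obtain rfl | ⟨σ, hσ⟩ := X.eq_empty_or_nonempty
  · exact ⟨∅, empty_subset _, bd_empty⟩
  obtain ⟨hσV, hσd⟩ := mem_simplices.mp (hXV hσ)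
  obtain ⟨v, hv⟩ : σ.Nonempty := card_pos.mp (by lia)
  exact ⟨cone v (deletion v X),
    cone_subset_simplices (hσV hv) ((filter_subset _ X).trans hXV) (avoids_deletion v X),
    bd_cone_deletion_of_bd_eq_empty v hX⟩

lemma IsAcyclic.eq_empty (hT : IsAcyclic T) (hYT : Y ⊆ T) (hY : bd Y = ∅) : Y = ∅ :=
  not_not.mp fun hne => hT Y hYT hne hY

lemma IsAcyclic.symmDiff_cone (hA : IsAcyclic A) (hB : IsAcyclic B) (hvA : Avoids v A)
    (hvB : Avoids v B) : IsAcyclic (A ∆ cone v B) := by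
  intro Y hY hne hbd
  have deletion_subset : deletion v Y ⊆ A :=
    hvA.deletion_symmDiff_cone B ▸ filter_subset_filter _ hY
  have link_subset : link v Y ⊆ B :=
    hvA.link_symmDiff_cone hvB ▸ image_subset_image (filter_subset_filter _ hY)
  have link_eq_empty : link v Y = ∅ :=
    hB.eq_empty link_subset (bd_link_of_bd_eq_empty v hbd)
  have deletion_eq_empty : deletion v Y = ∅ :=
    hA.eq_empty deletion_subset (by rw [bd_deletion_of_bd_eq_empty v hbd, link_eq_empty])
  apply hne
  rw [← deletion_symmDiff_cone_link v Y, deletion_eq_empty, link_eq_empty]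
  rfl

lemma IsHypertreeOn.exists_subset_bd_eq_bd_singleton (hT : IsHypertreeOn V d T)
    (hσ : σ ∈ simplices V d) : ∃ G ⊆ T, bd G = bd {σ} := by
  obtain ⟨hTV, hacyclic, hmax⟩ := hT
  by_cases hσT : σ ∈ T
  · exact ⟨{σ}, singleton_subset_iff.mpr hσT, rfl⟩
  have not_acyclic : ¬IsAcyclic (insert σ T) := fun h =>
    hσT (hmax _ (subset_insert σ T) (insert_subset hσ hTV) h ▸ mem_insert_self σ T)
  obtain ⟨Y, hYT, hne, hY⟩ : ∃ Y ⊆ insert σ T, Y ≠ ∅ ∧ bd Y = ∅ := by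
    simpa [IsAcyclic] using not_acyclic
  have hσY : σ ∈ Y := by
    by_contra h
    exact hne (hacyclic.eq_empty ((subset_insert_iff_of_notMem h).mp hYT) hY)
  refine ⟨Y.erase σ, subset_insert_iff.mp hYT, ?_⟩
  rw [← insert_erase hσY, ← singleton_symmDiff_of_notMem (notMem_erase σ Y), bd_symmDiff] at hY
  exact (symmDiff_eq_empty.mp hY).symm

lemma IsHypertreeOn.exists_subset_bd_eq_bd (hT : IsHypertreeOn V d T)
    (hX : X ⊆ simplices V d) : ∃ G ⊆ T, bd G = bd X := by
  induction X using Finset.induction_on with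
  | empty => exact ⟨∅, empty_subset T, rfl⟩
  | insert σ X hσ ih =>
    obtain ⟨hσV, hXV⟩ := insert_subset_iff.mp hX
    obtain ⟨G, hGT, hG⟩ := hT.exists_subset_bd_eq_bd_singleton hσV
    obtain ⟨H, hHT, hH⟩ := ih hXV
    refine ⟨G ∆ H, symmDiff_subset_of_subset hGT hHT, ?_⟩
    rw [← singleton_symmDiff_of_notMem hσ, bd_symmDiff, bd_symmDiff, hG, hH]

lemma fill_subset (Z T : Finset (Finset ℕ)) : fill Z T ⊆ T := by
  unfold fill
  split_ifs with h
  · exact h.choose_spec.1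
  · exact empty_subset T

lemma bd_fill (h : ∃ F ⊆ T, bd F = Z) : bd (fill Z T) = Z := by
  rw [fill, dif_pos h]
  exact h.choose_spec.2

lemma IsAcyclic.fill_eq (hT : IsAcyclic T) (hGT : G ⊆ T) (hG : bd G = Z) : fill Z T = G := by
  have bd_fill_symmDiff : bd (fill Z T ∆ G) = ∅ := by
    rw [bd_symmDiff, bd_fill ⟨G, hGT, hG⟩, hG]
    exact symmDiff_self Z
  exact symmDiff_eq_empty.mp
    (hT.eq_empty (symmDiff_subset_of_subset (fill_subset Z T) hGT) bd_fill_symmDiff)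

lemma IsHypertreeOn.bd_fill_bd (hT : IsHypertreeOn V d T) (hX : X ⊆ simplices V d) :
    bd (fill (bd X) T) = bd X :=
  bd_fill (hT.exists_subset_bd_eq_bd hX)

lemma IsHypertreeOn.bd_fill_of_bd_eq_empty (hT : IsHypertreeOn V (d + 1) T)
    (hZV : Z ⊆ simplices V d) (hZ : bd Z = ∅) : bd (fill Z T) = Z := by
  obtain ⟨Y, hYV, rfl⟩ := exists_bd_eq_of_bd_eq_empty hZV hZ
  exact hT.bd_fill_bd hYV

theorem fill_conical_extension_general {Z' : Finset (Finset ℕ)} (hv : v ∉ V)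
    (hT : IsHypertreeOn V (d + 1) T) (hS : IsHypertreeOn V d S)
    (hZV : Z ⊆ simplices (insert v V) d) (hZ : bd Z = ∅) (hF : F = fill (link v Z) S)
    (hZ' : Z' = (Z ∆ cone v (link v Z)) ∆ F) :
    Z' ⊆ simplices V d ∧ bd Z' = ∅ ∧
      fill Z (T ∆ cone v S) = cone v F ∆ fill Z' T := by
  have hDV : deletion v Z ⊆ simplices V d := deletion_subset_simplices hZV
  have hD : bd (deletion v Z) = link v Z := bd_deletion_of_bd_eq_empty v hZ
  have hFS : F ⊆ S := hF ▸ fill_subset (link v Z) S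
  have hbdF : bd F = link v Z := by rw [hF, ← hD, hS.bd_fill_bd hDV]
  have hZ'V : Z' ⊆ simplices V d := by
    rw [hZ', symmDiff_cone_link]
    exact symmDiff_subset_of_subset hDV (hFS.trans hS.1)
  have hbdZ' : bd Z' = ∅ := by
    rw [hZ', symmDiff_cone_link, bd_symmDiff, hD, hbdF]
    exact symmDiff_self _
  have hvT : Avoids v T := avoids_of_subset_simplices hv hT.1
  have hvS : Avoids v S := avoids_of_subset_simplices hv hS.1
  refine ⟨hZ'V, hbdZ', (hT.2.1.symmDiff_cone hS.2.1 hvT hvS).fill_eq ?_ ?_⟩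
  · rw [hvT.symmDiff_cone_eq_union, union_comm]
    exact symmDiff_subset_union.trans
      (union_subset_union (image_subset_image hFS) (fill_subset Z' T))
  · calc bd (cone v F ∆ fill Z' T)
        = (F ∆ cone v (link v Z)) ∆ Z' := by
          rw [bd_symmDiff, bd_cone (hvS.mono hFS), hbdF, hT.bd_fill_of_bd_eq_empty hZ'V hbdZ']
      _ = Z := by
          rw [hZ', symmDiff_comm F, symmDiff_symmDiff_symmDiff_comm, symmDiff_self,
            symmDiff_bot, symmDiff_comm, symmDiff_symmDiff_cancel_right]

end Chains

lemma rng_subset_insert (n : ℕ) : rng n ⊆ insert n (rng (n - 1)) := by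
  intro x hx
  simp only [rng, mem_insert, mem_Icc] at hx ⊢
  lia

lemma notMem_rng_sub_one (n : ℕ) : n ∉ rng (n - 1) := by
  rw [rng, mem_Icc]
  lia

/-- Fillings and conical extensions: if `T_{n-1}^d` is a `d`-hypertree and
`T_{n-1}^{d-1}` a `(d-1)`-hypertree, both on `[n-1]`, and
`T_n^d = T_{n-1}^d ⊕ Cone_n(T_{n-1}^{d-1})`, then for every `(d-1)`-cycle `Z` on `[n]`,
with `F = Fill(Link_n Z, T_{n-1}^{d-1})` and `Z' = Z ⊕ Cone_n(Link_n Z) ⊕ F`, the set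
`Z'` is a `(d-1)`-cycle on `[n-1]` and `Fill(Z, T_n^d) = Cone_n(F) ⊕ Fill(Z', T_{n-1}^d)`. -/
theorem fill_conical_extension (d n : ℕ) (hd : 1 ≤ d)
    (Td Td1 : Finset (Finset ℕ))
    (hTd : IsHypertreeOn (rng (n - 1)) d Td)
    (hTd1 : IsHypertreeOn (rng (n - 1)) (d - 1) Td1)
    (Z : Finset (Finset ℕ)) (hZ : Z ⊆ simplices (rng n) (d - 1)) (hZcyc : bd Z = ∅)
    (F Z' : Finset (Finset ℕ)) (hF : F = fill (link n Z) Td1)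
    (hZ' : Z' = (Z ∆ cone n (link n Z)) ∆ F) :
    Z' ⊆ simplices (rng (n - 1)) (d - 1) ∧ bd Z' = ∅ ∧
      fill Z (Td ∆ cone n Td1) = cone n F ∆ fill Z' Td := by
  obtain ⟨d, rfl⟩ := Nat.exists_eq_add_of_le' hd
  exact fill_conical_extension_general (notMem_rng_sub_one _) hTd hTd1
    (hZ.trans (simplices_mono (rng_subset_insert n))) hZcyc hF hZ'
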